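/- For every z ≥ 0, the Mittag-Leffler density of index 2/3 admits the closed form f_{2/3}(z) = (2^{1/3}/√(3π))·z·e^{-4z³/27}·U(1/6, 4/3; 4z³/27), where for w > 0, U(1/6,4/3;w) = (1/Γ(1/6))·∫₀^∞ e^{-ws}·s^{-5/6}·(1+s)^{1/6} ds (and at w = 0 the formula is interpreted by continuity). -/

import Mathlib

open Real MeasureTheory Set Filter Topology

noncomputable section

/-- The Mittag-Leffler density of index `2/3`, defined by its entire power series. -/
def mittagLeffler23 (x : ℝ) : ℝ :=
  (1 / π) * ∑' k : ℕ,
    (Real.sin (2 * π * ((k : ℝ) + 1) / 3) * Real.Gamma (2 * ((k : ℝ) + 1) / 3) /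
      (Nat.factorial k : ℝ)) * (-x) ^ k

/-- Confluent hypergeometric function of the second kind (Tricomi function),
via its integral representation. -/
def tricomiU (a b z : ℝ) : ℝ :=
  (1 / Real.Gamma a) * ∫ s in Ioi (0:ℝ), Real.exp (-z * s) * s ^ (a - 1) * (1 + s) ^ (b - a - 1)


/-- coefficient -/
def mlc (k : ℕ) : ℝ := Real.sin (2 * π * ((k : ℝ) + 1) / 3) * Real.Gamma (2 * ((k : ℝ) + 1) / 3) /
      (Nat.factorial k : ℝ) * (-1) ^ k

/-- entire coefficient sequences -/
def EntireCoeff (a : ℕ → ℝ) : Prop := ∀ R : ℝ, 0 < R → Summable fun k => |a k| * R ^ k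

/-- derivative coefficients -/
def dcoef (a : ℕ → ℝ) (k : ℕ) : ℝ := ((k : ℝ) + 1) * a (k + 1)

lemma EntireCoeff.summable {a : ℕ → ℝ} (h : EntireCoeff a) (x : ℝ) : Summable fun k => a k * x ^ k := by
  have h1 := h (|x| + 1) (by positivity)
  refine Summable.of_norm_bounded h1 fun k => ?_
  rw [norm_mul, norm_pow, Real.norm_eq_abs, Real.norm_eq_abs]
  gcongr
  linarith

lemma EntireCoeff.dcoef {a : ℕ → ℝ} (h : EntireCoeff a) : EntireCoeff (dcoef a) := by
  intro R hR
  have h1 := (summable_nat_add_iff 1).2 (h (2 * (R + 1)) (by positivity))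
  refine Summable.of_nonneg_of_le (fun k => by positivity) (fun k => ?_) h1
  rw [_root_.dcoef, abs_mul, abs_of_nonneg (by positivity : (0:ℝ) ≤ (k:ℝ) + 1), mul_pow]
  have h2 : ((k:ℝ) + 1) ≤ 2 ^ (k + 1) := by
    exact_mod_cast (Nat.lt_two_pow_self (n := k + 1)).le
  have h3 : R ^ k ≤ (R + 1) ^ (k + 1) := by
    calc R ^ k ≤ (R + 1) ^ k := by gcongr; linarith
      _ ≤ (R + 1) ^ (k + 1) := by
        apply pow_le_pow_right₀ <;> linarith
  calc ((k:ℝ) + 1) * |a (k + 1)| * R ^ k ≤ 2 ^ (k + 1) * |a (k + 1)| * (R + 1) ^ (k + 1) := by gcongr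
    _ = _ := by ring

lemma EntireCoeff.hasDerivAt {a : ℕ → ℝ} (h : EntireCoeff a) (x : ℝ) :
    HasDerivAt (fun y => ∑' k, a k * y ^ k) (∑' k, _root_.dcoef a k * x ^ k) x := by
  set R := |x| + 1 with hR
  have hRp : 0 < R := by positivity
  have key := h.dcoef R hRp
  have hu : Summable fun k : ℕ => |a k| * (k * R ^ (k - 1)) := by
    rw [← summable_nat_add_iff 1]
    refine key.congr fun k => ?_
    rw [_root_.dcoef, abs_mul, abs_of_nonneg (by positivity : (0:ℝ) ≤ (k:ℝ) + 1)]
    push_cast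
    ring
  have := hasDerivAt_tsum_of_isPreconnected (g := fun k y => a k * y ^ k)
    (g' := fun k y => a k * (k * y ^ (k - 1))) (u := fun k : ℕ => |a k| * (k * R ^ (k - 1)))
    (t := Metric.ball 0 R) (y₀ := 0) (y := x) hu Metric.isOpen_ball
    (convex_ball (0:ℝ) R).isPreconnected
    (fun k y _ => (hasDerivAt_pow k y).const_mul (a k))
    (fun k y hy => by
      have hy' : |y| ≤ R := by simpa using (mem_ball_zero_iff.1 hy).le
      rw [norm_mul, norm_mul, norm_pow, Real.norm_eq_abs, Real.norm_eq_abs, Real.norm_eq_abs, Nat.abs_cast]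
      gcongr)
    (by simpa using hRp) (h.summable 0) (by simp [hR])
  refine this.congr_deriv ?_
  rw [Summable.tsum_eq_zero_add]
  · simp only [_root_.dcoef]
    simp
    exact tsum_congr fun k => by ring
  · refine Summable.of_norm_bounded hu fun k => ?_
    rw [norm_mul, norm_mul, norm_pow, Real.norm_eq_abs, Real.norm_eq_abs, Real.norm_eq_abs, Nat.abs_cast]
    gcongr
    simp [hR]

lemma mlc_bound (k : ℕ) : |mlc (k+1)| ≤ (((k+1).factorial : ℝ) ^ ((1:ℝ)/3))⁻¹ := by
  have hk : (0:ℝ) < ((k+1).factorial : ℝ) := by positivity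
  have hf1 : (1:ℝ) ≤ ((k+1).factorial : ℝ) := by exact_mod_cast Nat.one_le_iff_ne_zero.2 (Nat.factorial_ne_zero _)
  have h1 : Real.Gamma ((k:ℝ) + 3/2) ≤ ((k+1).factorial : ℝ) := by
    have := Real.Gamma_mul_add_mul_le_rpow_Gamma_mul_rpow_Gamma (s := (k:ℝ) + 1) (t := (k:ℝ) + 1 + 1)
      (a := 1/2) (b := 1/2) (by positivity) (by positivity) (by norm_num) (by norm_num) (by norm_num)
    rw [Real.Gamma_nat_eq_factorial, show ((k:ℝ)+1+1) = ((k+1 : ℕ):ℝ) + 1 by push_cast; ring, Real.Gamma_nat_eq_factorial] at this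
    have h2 : ((k.factorial : ℝ)) ^ ((1:ℝ)/2) ≤ ((k+1).factorial : ℝ) ^ ((1:ℝ)/2) := by
      gcongr; simp
    calc Real.Gamma ((k:ℝ) + 3/2) = _ := by congr 1; push_cast; ring
      _ ≤ _ := this
      _ ≤ ((k+1).factorial : ℝ) ^ ((1:ℝ)/2) * ((k+1).factorial : ℝ) ^ ((1:ℝ)/2) := by gcongr
      _ = _ := by rw [← Real.rpow_add hk]; norm_num
  have h2 : Real.Gamma (2 * (((k+1 : ℕ) : ℝ) + 1) / 3) ≤ ((k+1).factorial : ℝ) ^ ((2:ℝ)/3) := by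
    have := Real.Gamma_mul_add_mul_le_rpow_Gamma_mul_rpow_Gamma (s := (k:ℝ) + 3/2) (t := 1)
      (a := 2/3) (b := 1/3) (by positivity) (by positivity) (by norm_num) (by norm_num) (by norm_num)
    rw [Real.Gamma_one, Real.one_rpow, mul_one, mul_one] at this
    calc _ = _ := by congr 1; push_cast; ring
      _ ≤ _ := this
      _ ≤ _ := by
        have : 0 ≤ Real.Gamma ((k:ℝ) + 3/2) := Real.Gamma_nonneg_of_nonneg (by positivity)
        exact Real.rpow_le_rpow this h1 (by norm_num)
  rw [mlc, abs_mul, abs_div, abs_mul, abs_pow, abs_neg, abs_one, one_pow, mul_one, Nat.abs_cast,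
    abs_of_nonneg (Real.Gamma_nonneg_of_nonneg (by positivity : 0 ≤ 2 * (((k+1 : ℕ) : ℝ) + 1) / 3)),
    ← Real.rpow_neg hk.le]
  calc _ ≤ 1 * ((k+1).factorial : ℝ) ^ ((2:ℝ)/3) / ((k+1).factorial : ℝ) := by
        gcongr
        exact Real.abs_sin_le_one _
    _ = _ := by
        rw [one_mul, ← Real.rpow_sub_one hk.ne']; norm_num

lemma mlc_entire : EntireCoeff mlc := by
  intro R hR
  rw [← summable_nat_add_iff 1]
  have hs : Summable fun k : ℕ => (((k+1).factorial : ℝ) ^ ((1:ℝ)/3))⁻¹ * R ^ (k+1) := by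
    rw [summable_nat_add_iff 1 (f := fun k : ℕ => ((k.factorial : ℝ) ^ ((1:ℝ)/3))⁻¹ * R ^ k)]
    refine summable_of_ratio_test_tendsto_lt_one (l := 0) one_pos (.of_forall fun k => by positivity) ?_
    have : Tendsto (fun k : ℕ => R * ((k:ℝ) + 1) ^ (-((1:ℝ)/3))) atTop (𝓝 (R * 0)) := by
      refine Tendsto.const_mul _ ?_
      exact (tendsto_rpow_neg_atTop (by norm_num)).comp
        (tendsto_atTop_add_const_right _ _ tendsto_natCast_atTop_atTop)
    rw [mul_zero] at this
    refine this.congr fun k => ?_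
    rw [Real.norm_of_nonneg (by positivity), Real.norm_of_nonneg (by positivity), Nat.factorial_succ]
    push_cast
    rw [Real.mul_rpow (by positivity) (by positivity), Real.rpow_neg (by positivity)]
    field_simp
    ring
  refine Summable.of_nonneg_of_le (fun k => by positivity) (fun k => ?_) hs
  gcongr
  exact mlc_bound k

lemma mlc_rec (k : ℕ) : ((k:ℝ)+2) * ((k:ℝ)+3) * mlc (k+3) = -(2/9) * (2*k+5) * mlc k := by
  have h1 : Real.sin (2 * π * (((k+3 : ℕ) : ℝ) + 1) / 3) = Real.sin (2 * π * ((k : ℝ) + 1) / 3) := by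
    rw [← Real.sin_add_two_pi (2 * π * ((k : ℝ) + 1) / 3)]; congr 1; push_cast; ring
  have h2 : Real.Gamma (2 * (((k+3 : ℕ) : ℝ) + 1) / 3) =
      (2 * ((k : ℝ) + 1) / 3 + 1) * ((2 * ((k : ℝ) + 1) / 3) * Real.Gamma (2 * ((k : ℝ) + 1) / 3)) := by
    rw [← Real.Gamma_add_one (by positivity), ← Real.Gamma_add_one (by positivity)]
    congr 1; push_cast; ring
  have h3 : ((k+3).factorial : ℝ) = ((k:ℝ)+3)*((k:ℝ)+2)*((k:ℝ)+1)* (k.factorial : ℝ) := by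
    rw [Nat.factorial_succ, Nat.factorial_succ, Nat.factorial_succ]; push_cast; ring
  have h4 : (k.factorial : ℝ) ≠ 0 := by positivity
  rw [mlc, mlc, h1, h2, h3, pow_add]
  have : ((k:ℝ)+1) ≠ 0 := by positivity
  have : ((k:ℝ)+2) ≠ 0 := by positivity
  have : ((k:ℝ)+3) ≠ 0 := by positivity
  field_simp
  ring

/-- the unnormalised series -/
def mlf (x : ℝ) : ℝ := ∑' k, mlc k * x ^ k
/-- its derivative -/
def mlf' (x : ℝ) : ℝ := ∑' k, dcoef mlc k * x ^ k

lemma mlf_hasDerivAt (x : ℝ) : HasDerivAt mlf (mlf' x) x := mlc_entire.hasDerivAt x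

lemma mlc_two : mlc 2 = 0 := by
  simp only [mlc]
  rw [show 2 * π * (((2:ℕ):ℝ) + 1) / 3 = 2 * π by push_cast; ring, Real.sin_two_pi]
  simp

lemma mlf'_hasDerivAt (x : ℝ) :
    HasDerivAt mlf' (-(4/9) * x^2 * mlf' x - (10/9) * x * mlf x) x := by
  have h := mlc_entire.dcoef.hasDerivAt x
  refine HasDerivAt.congr_deriv h ?_
  symm
  have s0 := mlc_entire.summable x
  have s1 := mlc_entire.dcoef.summable x
  have s2 := mlc_entire.dcoef.dcoef.summable x
  have e1 : x * mlf' x = ∑' k : ℕ, (k:ℝ) * mlc k * x ^ k := by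
    rw [Summable.tsum_eq_zero_add, mlf', ← tsum_mul_left]
    · simp only [dcoef]
      push_cast
      simp only [zero_mul, zero_add]
      exact tsum_congr fun k => by ring
    · rw [← summable_nat_add_iff 1]
      refine (s1.mul_left x).congr fun k => ?_
      simp only [dcoef]; push_cast; ring
  have s1' : Summable fun k : ℕ => (k:ℝ) * mlc k * x ^ k := by
    rw [← summable_nat_add_iff 1]
    refine (s1.mul_left x).congr fun k => ?_
    simp only [dcoef]; push_cast; ring
  rw [s2.tsum_eq_zero_add]
  have e2 : dcoef (dcoef mlc) 0 = 0 := by simp [dcoef, mlc_two]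
  rw [e2, zero_mul, zero_add]
  rw [show -(4/9) * x^2 * mlf' x - (10/9) * x * mlf x = (-(4/9) * x) * (x * mlf' x) + (-(10/9) * x) * mlf x by ring, e1, mlf, ← tsum_mul_left, ← tsum_mul_left, ← (s1'.mul_left _).tsum_add (s0.mul_left _)]
  refine tsum_congr fun k => ?_
  have := mlc_rec k
  simp only [dcoef]
  push_cast
  rw [show k + 1 + 1 + 1 = k + 3 by ring, show ((k:ℝ)+1+1) * (((k:ℝ)+1+1+1) * mlc (k+3)) = -(2/9) * (2*k+5) * mlc k by rw [← this]; ring]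
  ring

lemma mlf_zero : mlf 0 = √3/2 * Real.Gamma (2/3) := by
  rw [mlf, tsum_eq_single 0 (by intro b hb; simp [hb])]
  simp only [mlc]
  rw [show 2 * π * (((0:ℕ):ℝ) + 1) / 3 = π - π/3 by push_cast; ring, Real.sin_pi_sub, Real.sin_pi_div_three]
  simp

lemma mlf'_zero : mlf' 0 = √3/2 * (Real.Gamma (1/3) / 3) := by
  rw [mlf', tsum_eq_single 0 (by intro b hb; simp [hb])]
  simp only [mlc, dcoef]
  rw [show 2 * π * (((0+1:ℕ):ℝ) + 1) / 3 = π/3 + π by push_cast; ring, Real.sin_add_pi, Real.sin_pi_div_three,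
    show 2 * (((0+1:ℕ):ℝ) + 1) / 3 = 1/3 + 1 by push_cast; ring, Real.Gamma_add_one (by norm_num)]
  simp
  ring

/-- the basic integrals -/
def MI (p w : ℝ) : ℝ := ∫ y in Ioi (0:ℝ), Real.exp (-w * (1 + y)) * y ^ (-(5:ℝ)/6) * (1 + y) ^ p

lemma rpow_exp_int {s w : ℝ} (hs : -1 < s) (hw : 0 < w) :
    IntegrableOn (fun y : ℝ => y ^ s * Real.exp (-w * y)) (Ioi 0) := by
  simpa using integrableOn_rpow_mul_exp_neg_mul_rpow hs one_pos hw

lemma MI_meas (p w : ℝ) : AEStronglyMeasurable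
    (fun y : ℝ => Real.exp (-w * (1 + y)) * y ^ (-(5:ℝ)/6) * (1 + y) ^ p)
      (volume.restrict (Ioi 0)) :=
  Measurable.aestronglyMeasurable (by fun_prop)

lemma MI_int {p w : ℝ} (hp : p ≤ 2) (hw : 0 < w) :
    IntegrableOn (fun y : ℝ => Real.exp (-w * (1 + y)) * y ^ (-(5:ℝ)/6) * (1 + y) ^ p) (Ioi 0) := by
  have h1 := ((rpow_exp_int (s := -(5:ℝ)/6) (by norm_num) hw).add
    ((rpow_exp_int (s := (1:ℝ)/6) (by norm_num) hw).const_mul 2)).add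
    (rpow_exp_int (s := (7:ℝ)/6) (by norm_num) hw)
  refine Integrable.mono' h1 (MI_meas p w) ?_
  refine ae_restrict_of_forall_mem measurableSet_Ioi fun y (hy : 0 < y) => ?_
  rw [Real.norm_of_nonneg (by positivity)]
  have e1 : Real.exp (-w * (1 + y)) ≤ Real.exp (-w * y) := by
    apply Real.exp_le_exp.2; nlinarith
  have e2 : (1 + y) ^ p ≤ (1 + y) ^ (2:ℝ) := Real.rpow_le_rpow_of_exponent_le (by linarith) hp
  have e3 : y ^ ((1:ℝ)/6) = y ^ (-(5:ℝ)/6) * y := by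
    rw [← Real.rpow_add_one hy.ne']; norm_num
  have e4 : y ^ ((7:ℝ)/6) = y ^ (-(5:ℝ)/6) * y * y := by
    rw [← Real.rpow_add_one hy.ne', ← Real.rpow_add_one hy.ne']; norm_num
  rw [Real.rpow_two] at e2
  simp only [Pi.add_apply]
  rw [e3, e4]
  calc _ ≤ Real.exp (-w * y) * y ^ (-(5:ℝ)/6) * (1 + y) ^ 2 := by gcongr
    _ = _ := by ring

lemma MI_deriv {p w : ℝ} (hp : p ≤ 1) (hw : 0 < w) :
    HasDerivAt (MI p) (- MI (p+1) w) w := by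
  have := (hasDerivAt_integral_of_dominated_loc_of_deriv_le
    (μ := volume.restrict (Ioi 0)) (x₀ := w) (s := Ioi (w/2))
    (F := fun w y => Real.exp (-w * (1 + y)) * y ^ (-(5:ℝ)/6) * (1 + y) ^ p)
    (F' := fun w y => -(Real.exp (-w * (1 + y)) * y ^ (-(5:ℝ)/6) * (1 + y) ^ (p+1)))
    (bound := fun y => Real.exp (-(w/2) * (1 + y)) * y ^ (-(5:ℝ)/6) * (1 + y) ^ (p+1))
    (Ioi_mem_nhds (by linarith)) (.of_forall fun x => MI_meas p x) (MI_int (by linarith) hw)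
    (MI_meas (p+1) w).neg ?_ (MI_int (by linarith) (by linarith)) ?_).2
  · rw [integral_neg] at this
    exact this
  · refine ae_restrict_of_forall_mem measurableSet_Ioi fun y (hy : 0 < y) x (hx : w/2 < x) => ?_
    rw [norm_neg, Real.norm_of_nonneg (by positivity)]
    gcongr
  · refine ae_restrict_of_forall_mem measurableSet_Ioi fun y (hy : 0 < y) x (hx : w/2 < x) => ?_
    have h1 : HasDerivAt (fun x : ℝ => -x * (1 + y)) (-1 * (1 + y)) x :=
      ((hasDerivAt_id x).neg).mul_const _
    have h2 := ((h1.exp).mul_const (y ^ (-(5:ℝ)/6))).mul_const ((1+y)^p)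
    refine h2.congr_deriv ?_
    rw [Real.rpow_add_one (by positivity)]
    ring

lemma MI_rel {w : ℝ} (hw : 0 < w) :
    w * (MI (7/6) w - MI (1/6) w) = MI (1/6) w / 3 - MI (-5/6) w / 6 := by
  have i1 := MI_int (p := 7/6) (by norm_num) hw
  have i2 := MI_int (p := 1/6) (by norm_num) hw
  have i3 := MI_int (p := -5/6) (by norm_num) hw
  have key := integral_Ioi_of_hasDerivAt_of_tendsto (a := 0) (m := 0)
    (f := fun y : ℝ => y ^ ((1:ℝ)/6) * ((1 + y) ^ ((1:ℝ)/6) * Real.exp (-w * (1 + y))))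
    (f' := fun y : ℝ => (-w) * (Real.exp (-w * (1 + y)) * y ^ (-(5:ℝ)/6) * (1 + y) ^ ((7:ℝ)/6))
      + (w + 1/3) * (Real.exp (-w * (1 + y)) * y ^ (-(5:ℝ)/6) * (1 + y) ^ ((1:ℝ)/6))
      + (-1/6) * (Real.exp (-w * (1 + y)) * y ^ (-(5:ℝ)/6) * (1 + y) ^ (-(5:ℝ)/6)))
    ?_ ?_ (((i1.const_mul _).add (i2.const_mul _)).add (i3.const_mul _)) ?_
  · rw [integral_add, integral_add, integral_const_mul, integral_const_mul, integral_const_mul] at key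
    · change -w * MI (7/6) w + (w + 1/3) * MI (1/6) w + (-1/6) * MI (-5/6) w = _ at key
      rw [Real.zero_rpow (by norm_num)] at key
      linarith
    · exact i1.const_mul _
    · exact i2.const_mul _
    · exact (i1.const_mul _).add (i2.const_mul _)
    · exact i3.const_mul _
  · refine ContinuousAt.continuousWithinAt ?_
    refine (Real.continuousAt_rpow_const _ _ (by norm_num)).mul (ContinuousAt.mul ?_ ?_)
    · exact ContinuousAt.rpow_const (by fun_prop) (by norm_num)
    · fun_prop
  · intro y (hy : 0 < y)
    have h0 : HasDerivAt (fun y : ℝ => 1 + y) 1 y := (hasDerivAt_id y).const_add 1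
    have h1 := Real.hasDerivAt_rpow_const (x := y) (p := (1:ℝ)/6) (.inl hy.ne')
    have h2 := h0.rpow_const (p := (1:ℝ)/6) (.inl (by positivity))
    have h3 := (h0.const_mul (-w)).exp
    refine (h1.mul (h2.mul h3)).congr_deriv ?_
    have hy1 : 0 < 1 + y := by positivity
    have e1 : y ^ ((1:ℝ)/6) = y ^ (-(5:ℝ)/6) * y := by
      rw [← Real.rpow_add_one hy.ne']; norm_num
    have e2 : (1 + y) ^ ((1:ℝ)/6) = (1 + y) ^ (-(5:ℝ)/6) * (1 + y) := by
      rw [← Real.rpow_add_one hy1.ne']; norm_num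
    have e3 : (1 + y) ^ ((7:ℝ)/6) = (1 + y) ^ (-(5:ℝ)/6) * (1 + y) * (1 + y) := by
      rw [← Real.rpow_add_one hy1.ne', ← Real.rpow_add_one hy1.ne']; norm_num
    simp only [Pi.mul_apply]
    rw [show (1:ℝ)/6 - 1 = -5/6 by norm_num, e1, e2, e3]
    ring
  · have t1 : Tendsto (fun y : ℝ => 1 + y) atTop atTop := tendsto_atTop_add_const_left _ _ tendsto_id
    have t2 := (tendsto_rpow_mul_exp_neg_mul_atTop_nhds_zero (1/3) w hw).comp t1
    refine tendsto_of_tendsto_of_tendsto_of_le_of_le' tendsto_const_nhds t2 ?_ ?_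
    · filter_upwards [eventually_gt_atTop 0] with y hy
      positivity
    · filter_upwards [eventually_gt_atTop 0] with y hy
      simp only [Function.comp]
      have hy1 : 0 < 1 + y := by positivity
      rw [← mul_assoc, show (1:ℝ)/3 = 1/6 + 1/6 by norm_num, Real.rpow_add hy1]
      gcongr
      linarith

lemma beta_half : ∫ y in Ioi (0:ℝ), y ^ (-(5:ℝ)/6) * (1 + y) ^ (-(5:ℝ)/6) =
    Real.Gamma (1/6) * Real.Gamma (2/3) / Real.Gamma (5/6) := by
  have hb := ProbabilityTheory.beta_eq_betaIntegralReal (1/6) (2/3) (by norm_num) (by norm_num)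
  have hb2 : ProbabilityTheory.beta (1/6) (2/3) = ∫ x in Ioo (0:ℝ) 1, x ^ ((1:ℝ)/6 - 1) * (1 - x) ^ ((2:ℝ)/3 - 1) := by
    rw [hb, Complex.betaIntegral, intervalIntegral.integral_of_le (by norm_num),
      ← integral_Ioc_eq_integral_Ioo, ← RCLike.re_to_complex, ← integral_re]
    · refine setIntegral_congr_fun measurableSet_Ioc fun x ⟨hx1, hx₂⟩ ↦ ?_
      norm_cast
      rw [← Complex.ofReal_cpow, ← Complex.ofReal_cpow, RCLike.re_to_complex,
        Complex.re_mul_ofReal, Complex.ofReal_re]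
      all_goals linarith
    have := Complex.betaIntegral_convergent (u := ((1/6 : ℝ) : ℂ)) (v := ((2/3 : ℝ) : ℂ)) (by rw [Complex.ofReal_re]; norm_num) (by rw [Complex.ofReal_re]; norm_num)
    rw [intervalIntegrable_iff_integrableOn_Ioc_of_le (by simp), IntegrableOn] at this
    exact this
  rw [ProbabilityTheory.beta, show (1:ℝ)/6 + 2/3 = 5/6 by norm_num] at hb2
  rw [hb2]
  have himg : Set.image (fun y : ℝ => y / (1 + y)) (Ioi 0) = Ioo 0 1 := by
    ext x
    constructor
    · rintro ⟨y, hy : 0 < y, rfl⟩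
      refine ⟨by positivity, ?_⟩
      rw [div_lt_one (by positivity)]; linarith
    · rintro ⟨h0, h1⟩
      have : 0 < 1 - x := by linarith
      refine ⟨x / (1 - x), by simp only [mem_Ioi]; positivity, ?_⟩
      field_simp
      ring
  rw [← himg, integral_image_eq_integral_abs_deriv_smul (f' := fun y => 1 / (1 + y)^2) measurableSet_Ioi]
  · refine setIntegral_congr_fun measurableSet_Ioi fun y (hy : 0 < y) ↦ ?_
    have hy1 : 0 < 1 + y := by positivity
    simp only [smul_eq_mul]
    rw [abs_of_pos (by positivity), show 1 - y / (1 + y) = (1 + y)⁻¹ by field_simp; ring, div_eq_mul_inv y,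
      Real.mul_rpow hy.le (by positivity), ← Real.rpow_neg_one (1+y), ← Real.rpow_mul hy1.le, ← Real.rpow_mul hy1.le,
      one_div, ← Real.rpow_two, ← Real.rpow_neg hy1.le, mul_assoc, mul_left_comm,
      ← Real.rpow_add hy1, ← Real.rpow_add hy1]
    norm_num
  · intro y (hy : 0 < y)
    have h0 : HasDerivAt (fun y : ℝ => 1 + y) 1 y := (hasDerivAt_id y).const_add 1
    have := (hasDerivAt_id y).div h0 (by positivity)
    refine (this.congr_deriv ?_).hasDerivWithinAt
    simp
  · intro a (ha : 0 < a) b (hb : 0 < b) hab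
    simp only at hab
    field_simp at hab
    linarith

lemma MI_lim_Y : Tendsto (MI (-5/6)) (𝓝[>] 0) (𝓝 (Real.Gamma (1/6) * Real.Gamma (2/3) / Real.Gamma (5/6))) := by
  have hpos : 0 < Real.Gamma (1/6) * Real.Gamma (2/3) / Real.Gamma (5/6) := by
    have := Real.Gamma_pos_of_pos (s := 1/6) (by norm_num)
    have := Real.Gamma_pos_of_pos (s := 2/3) (by norm_num)
    have := Real.Gamma_pos_of_pos (s := 5/6) (by norm_num)
    positivity
  have hint : IntegrableOn (fun y : ℝ => y ^ (-(5:ℝ)/6) * (1 + y) ^ (-(5:ℝ)/6)) (Ioi 0) := by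
    by_contra h
    have := integral_undef h
    rw [beta_half] at this
    exact hpos.ne' this
  rw [← beta_half]
  refine tendsto_integral_filter_of_dominated_convergence _ (.of_forall fun w => MI_meas _ w) ?_ hint ?_
  · filter_upwards [self_mem_nhdsWithin] with w (hw : 0 < w)
    refine ae_restrict_of_forall_mem measurableSet_Ioi fun y (hy : 0 < y) => ?_
    rw [Real.norm_of_nonneg (by positivity), mul_assoc]
    apply mul_le_of_le_one_left (by positivity)
    rw [Real.exp_le_one_iff]
    nlinarith
  · refine ae_restrict_of_forall_mem measurableSet_Ioi fun y (hy : 0 < y) => ?_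
    have : Continuous fun w : ℝ => Real.exp (-w * (1 + y)) * y ^ (-(5:ℝ)/6) * (1 + y) ^ (-(5:ℝ)/6) := by fun_prop
    have h := (this.tendsto 0).mono_left (nhdsWithin_le_nhds (s := Ioi 0))
    simpa using h

lemma Gamma_scaled {s w : ℝ} (hs : 0 < s) (hw : 0 < w) :
    ∫ y in Ioi (0:ℝ), y ^ (s - 1) * Real.exp (-w * y) = w ^ (-s) * Real.Gamma s := by
  have := Real.integral_rpow_mul_exp_neg_mul_Ioi hs hw
  simp only [neg_mul]
  rw [this, one_div, Real.inv_rpow hw.le, Real.rpow_neg hw.le]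

lemma MI_lim_X : Tendsto (fun w => w ^ ((1:ℝ)/3) * MI (1/6) w) (𝓝[>] 0) (𝓝 (Real.Gamma (1/3))) := by
  have lo : ∀ w : ℝ, 0 < w → Real.exp (-w) * Real.Gamma (1/3) ≤ w ^ ((1:ℝ)/3) * MI (1/6) w := by
    intro w hw
    have h : w ^ (-((1:ℝ)/3)) * Real.Gamma (1/3) ≤ Real.exp w * MI (1/6) w := by
      rw [← Gamma_scaled (by norm_num) hw, MI, ← integral_const_mul]
      refine setIntegral_mono_on (rpow_exp_int (by norm_num) hw) ((MI_int (by norm_num) hw).const_mul _) measurableSet_Ioi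
        fun y (hy : 0 < y) => ?_
      have e1 : Real.exp w * Real.exp (-w * (1 + y)) = Real.exp (-w * y) := by
        rw [← Real.exp_add]; congr 1; ring
      rw [show (1:ℝ)/3 - 1 = -5/6 + 1/6 by norm_num, Real.rpow_add hy, ← mul_assoc, ← mul_assoc, e1,
        mul_comm _ (Real.exp _), ← mul_assoc]
      gcongr
      linarith
    have e2 : w ^ ((1:ℝ)/3) * w ^ (-((1:ℝ)/3)) = 1 := by rw [← Real.rpow_add hw]; norm_num
    have e3 : Real.exp (-w) * Real.exp w = 1 := by rw [← Real.exp_add]; simp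
    calc Real.exp (-w) * Real.Gamma (1/3)
        = Real.exp (-w) * w ^ ((1:ℝ)/3) * (w ^ (-((1:ℝ)/3)) * Real.Gamma (1/3)) := by linear_combination (-Real.exp (-w) * Real.Gamma (1/3)) * e2
      _ ≤ Real.exp (-w) * w ^ ((1:ℝ)/3) * (Real.exp w * MI (1/6) w) := by gcongr
      _ = _ := by linear_combination w ^ ((1:ℝ)/3) * MI (1/6) w * e3
  have hi : ∀ w : ℝ, 0 < w → w ^ ((1:ℝ)/3) * MI (1/6) w ≤ Real.Gamma (1/3) + w ^ ((1:ℝ)/6) * Real.Gamma (1/6) := by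
    intro w hw
    have h : MI (1/6) w ≤ w ^ (-((1:ℝ)/3)) * Real.Gamma (1/3) + w ^ (-((1:ℝ)/6)) * Real.Gamma (1/6) := by
      have j1 := rpow_exp_int (s := (1:ℝ)/3 - 1) (by norm_num) hw
      have j2 := rpow_exp_int (s := (1:ℝ)/6 - 1) (by norm_num) hw
      rw [← Gamma_scaled (by norm_num) hw, ← Gamma_scaled (by norm_num) hw, MI, ← integral_add j1 j2]
      refine setIntegral_mono_on (MI_int (by norm_num) hw) (j1.add j2) measurableSet_Ioi
        fun y (hy : 0 < y) => ?_
      have e1 : Real.exp (-w * (1 + y)) ≤ Real.exp (-w * y) := by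
        apply Real.exp_le_exp.2; nlinarith
      have e2 : (1 + y) ^ ((1:ℝ)/6) ≤ 1 + y ^ ((1:ℝ)/6) := by
        have := Real.rpow_add_le_add_rpow (zero_le_one) hy.le (p := (1:ℝ)/6) (by norm_num) (by norm_num)
        simpa using this
      rw [show (1:ℝ)/3 - 1 = -5/6 + 1/6 by norm_num, Real.rpow_add hy, show (1:ℝ)/6 - 1 = -5/6 by norm_num]
      calc _ ≤ Real.exp (-w * y) * y ^ (-(5:ℝ)/6) * (1 + y ^ ((1:ℝ)/6)) := by gcongr
        _ = _ := by ring
    have e2 : w ^ ((1:ℝ)/3) * w ^ (-((1:ℝ)/3)) = 1 := by rw [← Real.rpow_add hw]; norm_num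
    have e3 : w ^ ((1:ℝ)/3) * w ^ (-((1:ℝ)/6)) = w ^ ((1:ℝ)/6) := by rw [← Real.rpow_add hw]; norm_num
    calc _ ≤ w ^ ((1:ℝ)/3) * (w ^ (-((1:ℝ)/3)) * Real.Gamma (1/3) + w ^ (-((1:ℝ)/6)) * Real.Gamma (1/6)) := by gcongr
      _ = _ := by linear_combination Real.Gamma (1/3) * e2 + Real.Gamma (1/6) * e3
  have t1 : Tendsto (fun w : ℝ => Real.exp (-w) * Real.Gamma (1/3)) (𝓝[>] 0) (𝓝 (Real.Gamma (1/3))) := by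
    have : Continuous fun w : ℝ => Real.exp (-w) * Real.Gamma (1/3) := by fun_prop
    simpa using (this.tendsto 0).mono_left (nhdsWithin_le_nhds (s := Ioi 0))
  have t2 : Tendsto (fun w : ℝ => Real.Gamma (1/3) + w ^ ((1:ℝ)/6) * Real.Gamma (1/6)) (𝓝[>] 0) (𝓝 (Real.Gamma (1/3))) := by
    have : ContinuousAt (fun w : ℝ => Real.Gamma (1/3) + w ^ ((1:ℝ)/6) * Real.Gamma (1/6)) 0 :=
      continuousAt_const.add ((Real.continuousAt_rpow_const _ _ (by norm_num)).mul continuousAt_const)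
    have h := this.tendsto.mono_left (nhdsWithin_le_nhds (s := Ioi 0))
    rwa [Real.zero_rpow (by norm_num), zero_mul, add_zero] at h
  refine tendsto_of_tendsto_of_tendsto_of_le_of_le' t1 t2 ?_ ?_
  · filter_upwards [self_mem_nhdsWithin] with w hw using lo w hw
  · filter_upwards [self_mem_nhdsWithin] with w hw using hi w hw

/-- the scaling constant -/
def kap : ℝ := (4/27 : ℝ) ^ ((1:ℝ)/3)

lemma kap_pos : 0 < kap := by unfold kap; positivity

lemma kap_cube : kap ^ 3 = 4/27 := by
  rw [kap, ← Real.rpow_natCast, ← Real.rpow_mul (by norm_num)]; norm_num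

lemma kap_eq : kap = 2 ^ ((2:ℝ)/3) / 3 := by
  rw [kap, show (4/27:ℝ) = 2^(2:ℝ) / 3^(3:ℝ) by norm_num, Real.div_rpow (by positivity) (by positivity),
    ← Real.rpow_mul (by norm_num), ← Real.rpow_mul (by norm_num)]
  norm_num

lemma w_rpow {z : ℝ} (hz : 0 < z) : (4 * z ^ 3 / 27) ^ ((1:ℝ)/3) = kap * z := by
  rw [show 4 * z ^ 3 / 27 = (4/27) * z ^ 3 by ring, Real.mul_rpow (by positivity) (by positivity), kap,
    ← Real.rpow_natCast z, ← Real.rpow_mul hz.le]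
  norm_num

lemma w_deriv (z : ℝ) : HasDerivAt (fun z : ℝ => 4 * z ^ 3 / 27) (4/9 * z^2) z := by
  refine (((hasDerivAt_pow 3 z).const_mul 4).div_const 27).congr_deriv ?_
  push_cast; ring

/-- first component -/
def XX (z : ℝ) : ℝ := kap * z * MI (1/6) (4 * z ^ 3 / 27)
/-- second component -/
def YY (z : ℝ) : ℝ := MI (-5/6) (4 * z ^ 3 / 27)

lemma YY_deriv {z : ℝ} (hz : 0 < z) : HasDerivAt YY (-(4/9) * z / kap * XX z) z := by
  have h := (MI_deriv (p := -5/6) (w := 4 * z^3/27) (by norm_num) (by positivity)).comp z (w_deriv z)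
  refine HasDerivAt.congr_deriv h ?_
  have := kap_pos
  rw [XX, show (-5/6:ℝ)+1 = 1/6 by norm_num]
  field_simp

lemma XX_deriv {z : ℝ} (hz : 0 < z) :
    HasDerivAt XX (-(4/9) * z^2 * XX z + kap / 2 * YY z) z := by
  have h := (MI_deriv (p := 1/6) (w := 4 * z^3/27) (by norm_num) (by positivity)).comp z (w_deriv z)
  have h2 := ((hasDerivAt_id z).const_mul kap).mul h
  refine HasDerivAt.congr_deriv h2 ?_
  have hr := MI_rel (w := 4 * z^3/27) (by positivity)
  simp only [XX, YY, Function.comp, id]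
  rw [show (1/6:ℝ)+1 = 7/6 by norm_num]
  linear_combination (-3 * kap) * hr

lemma w_tendsto : Tendsto (fun z : ℝ => 4 * z ^ 3 / 27) (𝓝[>] 0) (𝓝[>] 0) := by
  refine tendsto_nhdsWithin_iff.2 ⟨?_, ?_⟩
  · have : Continuous fun z : ℝ => 4 * z ^ 3 / 27 := by fun_prop
    simpa using (this.tendsto 0).mono_left (nhdsWithin_le_nhds (s := Ioi 0))
  · filter_upwards [self_mem_nhdsWithin] with z (hz : 0 < z)
    simp only [mem_Ioi]; positivity

lemma XX_lim : Tendsto XX (𝓝[>] 0) (𝓝 (Real.Gamma (1/3))) := by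
  refine (MI_lim_X.comp w_tendsto).congr' ?_
  filter_upwards [self_mem_nhdsWithin] with z (hz : 0 < z)
  simp only [Function.comp, XX, w_rpow hz]

lemma YY_lim : Tendsto YY (𝓝[>] 0) (𝓝 (Real.Gamma (1/6) * Real.Gamma (2/3) / Real.Gamma (5/6))) :=
  MI_lim_Y.comp w_tendsto

/-- the normalisation -/
def alp : ℝ := π * (2 ^ ((1:ℝ)/3) / √(3 * π)) / (kap * Real.Gamma (1/6))

lemma two_rpow_facts : (2:ℝ) ^ ((2:ℝ)/3) = 2 ^ ((1:ℝ)/3) * 2 ^ ((1:ℝ)/3) ∧ ((2:ℝ) ^ ((1:ℝ)/3)) ^ 3 = 2 := by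
  constructor
  · rw [← Real.rpow_add (by norm_num)]; norm_num
  · rw [← Real.rpow_natCast, ← Real.rpow_mul (by norm_num)]; norm_num

lemma start_val : alp * Real.Gamma (1/3) = √3/2 * Real.Gamma (2/3) := by
  have d := Real.Gamma_mul_Gamma_add_half (1/6)
  rw [show (1/6:ℝ)+1/2 = 2/3 by norm_num, show 2 * (1/6:ℝ) = 1/3 by norm_num,
    show (1:ℝ) - 1/3 = 2/3 by norm_num] at d
  obtain ⟨t1, t2⟩ := two_rpow_facts
  have g1 := Real.Gamma_pos_of_pos (s := 1/6) (by norm_num)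
  rw [alp, kap_eq, Real.sqrt_mul (by norm_num), t1]
  rw [t1] at d
  have hp : √π * √π = π := Real.mul_self_sqrt pi_pos.le
  have h3 : √3 * √3 = (3:ℝ) := Real.mul_self_sqrt (by norm_num)
  have hp0 : 0 < √π := Real.sqrt_pos.2 pi_pos
  have h30 : 0 < √(3:ℝ) := Real.sqrt_pos.2 (by norm_num)
  set c := (2:ℝ) ^ ((1:ℝ)/3) with hc
  have hc0 : 0 < c := by positivity
  set G1 := Real.Gamma (1/6)
  set G2 := Real.Gamma (2/3)
  set G3 := Real.Gamma (1/3)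
  field_simp
  linear_combination (-c * √π * G1 * G2) * h3 - 3 * c * √π * d - 3 * G3 * √π * √π * t2 - 6 * G3 * hp

lemma start_deriv : alp * (kap / 2) * (Real.Gamma (1/6) * Real.Gamma (2/3) / Real.Gamma (5/6)) =
    √3/2 * (Real.Gamma (1/3) / 3) := by
  have d := Real.Gamma_mul_Gamma_add_half (1/3)
  rw [show (1/3:ℝ)+1/2 = 5/6 by norm_num, show 2 * (1/3:ℝ) = 2/3 by norm_num,
    show (1:ℝ) - 2/3 = 1/3 by norm_num] at d
  have g1 := Real.Gamma_pos_of_pos (s := 1/6) (by norm_num)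
  have g5 := Real.Gamma_pos_of_pos (s := 5/6) (by norm_num)
  have hk := kap_pos
  rw [alp, Real.sqrt_mul (by norm_num)]
  have hp : √π * √π = π := Real.mul_self_sqrt pi_pos.le
  have h3 : √3 * √3 = (3:ℝ) := Real.mul_self_sqrt (by norm_num)
  have hp0 : 0 < √π := Real.sqrt_pos.2 pi_pos
  have h30 : 0 < √(3:ℝ) := Real.sqrt_pos.2 (by norm_num)
  set c := (2:ℝ) ^ ((1:ℝ)/3) with hc
  set G1 := Real.Gamma (1/6)
  set G2 := Real.Gamma (2/3)
  set G3 := Real.Gamma (1/3)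
  set G5 := Real.Gamma (5/6)
  field_simp
  linear_combination (-√π * G5 * G3) * h3 - 3 * √π * d - 3 * G2 * c * hp

/-- first defect -/
def D1 (z : ℝ) : ℝ := alp * XX z - mlf z
/-- second defect -/
def D2 (z : ℝ) : ℝ := alp * YY z - (mlf' z + 4/9 * z^2 * mlf z) * (2 / kap)

lemma D1_deriv {z : ℝ} (hz : 0 < z) : HasDerivAt D1 (-(4/9) * z^2 * D1 z + kap/2 * D2 z) z := by
  refine (((XX_deriv hz).const_mul alp).sub (mlf_hasDerivAt z)).congr_deriv ?_
  have := kap_pos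
  simp only [D1, D2]
  field_simp
  ring

lemma D2_deriv {z : ℝ} (hz : 0 < z) : HasDerivAt D2 (-(4/9) * z / kap * D1 z) z := by
  have h1 := (((hasDerivAt_pow 2 z).const_mul (4/9)).mul (mlf_hasDerivAt z))
  refine (((YY_deriv hz).const_mul alp).sub
    (((mlf'_hasDerivAt z).add h1).mul_const (2/kap))).congr_deriv ?_
  have := kap_pos
  simp only [D1]
  field_simp
  push_cast
  ring

lemma D1_lim : Tendsto D1 (𝓝[>] 0) (𝓝 0) := by
  have h := (XX_lim.const_mul alp).sub
    (((mlf_hasDerivAt 0).continuousAt.tendsto).mono_left (nhdsWithin_le_nhds (s := Ioi 0)))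
  rwa [start_val, mlf_zero, sub_self] at h

lemma D2_lim : Tendsto D2 (𝓝[>] 0) (𝓝 0) := by
  have hc : ContinuousAt (fun z => (mlf' z + 4/9 * z^2 * mlf z) * (2 / kap)) 0 :=
    (((mlf'_hasDerivAt 0).continuousAt).add ((by fun_prop : ContinuousAt (fun z : ℝ => 4/9 * z^2) 0).mul
      (mlf_hasDerivAt 0).continuousAt)).mul continuousAt_const
  have h := (YY_lim.const_mul alp).sub (hc.tendsto.mono_left (nhdsWithin_le_nhds (s := Ioi 0)))
  have e : alp * (Real.Gamma (1/6) * Real.Gamma (2/3) / Real.Gamma (5/6)) -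
      (mlf' 0 + 4/9 * 0^2 * mlf 0) * (2 / kap) = 0 := by
    have := kap_pos
    rw [mlf'_zero, ← start_deriv]
    field_simp
    ring
  rwa [e] at h

lemma D1_zero {z : ℝ} (hz : 0 < z) : D1 z = 0 := by
  have hk := kap_pos
  set K : ℝ := kap + 8 * z / (9 * kap) with hK
  set E : ℝ → ℝ := fun t => (D1 t * D1 t + D2 t * D2 t) * Real.exp (-K * t) with hE
  have hd : ∀ t, 0 < t → HasDerivAt E
      (((-(4/9) * t^2 * D1 t + kap/2 * D2 t) * D1 t + D1 t * (-(4/9) * t^2 * D1 t + kap/2 * D2 t) +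
        ((-(4/9) * t / kap * D1 t) * D2 t + D2 t * (-(4/9) * t / kap * D1 t))) * Real.exp (-K * t) +
        (D1 t * D1 t + D2 t * D2 t) * (Real.exp (-K * t) * (-K * 1))) t := fun t ht =>
    ((((D1_deriv ht).mul (D1_deriv ht)).add ((D2_deriv ht).mul (D2_deriv ht))).mul
      (((hasDerivAt_id t).const_mul (-K)).exp))
  have hanti : ∀ ε, 0 < ε → ε ≤ z → E z ≤ E ε := by
    intro ε hε hεz
    have : AntitoneOn E (Icc ε z) := by
      refine antitoneOn_of_deriv_nonpos (convex_Icc _ _)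
        (fun t ht => (hd t (lt_of_lt_of_le hε ht.1)).continuousAt.continuousWithinAt)
        (fun t ht => ?_) (fun t ht => ?_)
      · rw [interior_Icc] at ht
        exact (hd t (hε.trans ht.1)).differentiableAt.differentiableWithinAt
      · rw [interior_Icc] at ht
        have ht0 : 0 < t := hε.trans ht.1
        rw [(hd t ht0).deriv]
        set a := D1 t
        set b := D2 t
        set q := 4 * t / (9 * kap) with hq
        have hq0 : 0 < q := by positivity
        have hqz : 2 * q ≤ 8 * z / (9 * kap) := by
          rw [hq, ← mul_div_assoc]
          exact div_le_div_of_nonneg_right (by linarith [ht.2]) (by positivity)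
        have e : -(4/9) * t / kap = -q := by rw [hq]; field_simp
        rw [e]
        have : ((-(4/9) * t^2 * a + kap/2 * b) * a + a * (-(4/9) * t^2 * a + kap/2 * b) +
            ((-q * a) * b + b * (-q * a))) - K * (a * a + b * b) ≤ 0 := by
          have : (kap + 2 * q) * (a*a+b*b) ≤ K * (a * a + b * b) := by
            apply mul_le_mul_of_nonneg_right _ (add_nonneg (mul_self_nonneg a) (mul_self_nonneg b))
            linarith
          nlinarith [mul_nonneg hk.le (sq_nonneg (a-b)), mul_nonneg hq0.le (sq_nonneg (a+b)), sq_nonneg (t*a),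
            mul_nonneg hk.le (sq_nonneg a), mul_nonneg hk.le (sq_nonneg b), mul_nonneg hq0.le (sq_nonneg a), mul_nonneg hq0.le (sq_nonneg b)]
        have h2 := mul_nonpos_of_nonpos_of_nonneg this (Real.exp_pos (-K * t)).le
        linarith
    exact this ⟨le_rfl, hεz⟩ ⟨hεz, le_rfl⟩ hεz
  have hlim : Tendsto E (𝓝[>] 0) (𝓝 0) := by
    have hc : Continuous fun t : ℝ => Real.exp (-K * t) := by fun_prop
    have := ((D1_lim.mul D1_lim).add (D2_lim.mul D2_lim)).mul
      ((hc.tendsto 0).mono_left (nhdsWithin_le_nhds (s := Ioi 0)))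
    simpa [hE] using this
  have hle : E z ≤ 0 := by
    refine ge_of_tendsto hlim ?_
    filter_upwards [Ioo_mem_nhdsGT hz] with ε hε using hanti ε hε.1 hε.2.le
  have : D1 z * D1 z + D2 z * D2 z ≤ 0 := by
    by_contra h
    push Not at h
    have := mul_pos h (Real.exp_pos (-K * z))
    exact absurd hle (not_le.2 this)
  nlinarith [sq_nonneg (D1 z), sq_nonneg (D2 z)]

lemma ml_eq (x : ℝ) : mittagLeffler23 x = (1 / π) * mlf x := by
  rw [mittagLeffler23, mlf]
  congr 1
  refine tsum_congr fun k => ?_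
  rw [mlc, neg_pow]
  ring

lemma tric_eq (w : ℝ) : Real.exp (-w) * tricomiU (1/6) (4/3) w = 1 / Real.Gamma (1/6) * MI (1/6) w := by
  rw [tricomiU, mul_left_comm, MI, ← integral_const_mul]
  congr 1
  refine setIntegral_congr_fun measurableSet_Ioi fun y (hy : 0 < y) ↦ ?_
  rw [← mul_assoc, ← mul_assoc, ← Real.exp_add]
  norm_num
  left; left
  ring

lemma main_eq {z : ℝ} (hz : 0 < z) : mittagLeffler23 z =
        (2:ℝ) ^ ((1:ℝ)/3) / Real.sqrt (3 * π) * z * Real.exp (-4 * z ^ 3 / 27) *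
          tricomiU (1/6) (4/3) (4 * z ^ 3 / 27) := by
  have h : alp * XX z = mlf z := sub_eq_zero.1 (D1_zero hz)
  have h2 := tric_eq (4 * z ^ 3 / 27)
  rw [mul_assoc, show -4 * z ^ 3 / 27 = -(4 * z ^ 3 / 27) by ring, h2, ml_eq, ← h, alp, XX]
  have := kap_pos
  have g1 := Real.Gamma_pos_of_pos (s := 1/6) (by norm_num)
  have := pi_pos
  field_simp

/-- closed form of the Mittag-Leffler density of index `2/3`:
`f_{2/3}(z) = (2^{1/3}/√(3π))·z·e^{-4z³/27}·U(1/6,4/3;4z³/27)` for `z > 0`, and at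
`z = 0` the formula holds by continuity. -/
theorem stmt15 :
    (∀ z : ℝ, 0 < z →
      mittagLeffler23 z =
        (2:ℝ) ^ ((1:ℝ)/3) / Real.sqrt (3 * π) * z * Real.exp (-4 * z ^ 3 / 27) *
          tricomiU (1/6) (4/3) (4 * z ^ 3 / 27)) ∧
    Tendsto (fun z : ℝ =>
        (2:ℝ) ^ ((1:ℝ)/3) / Real.sqrt (3 * π) * z * Real.exp (-4 * z ^ 3 / 27) *
          tricomiU (1/6) (4/3) (4 * z ^ 3 / 27))
      (𝓝[>] 0) (𝓝 (mittagLeffler23 0)) := by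
  refine ⟨fun z hz => main_eq hz, ?_⟩
  have hc : Tendsto mittagLeffler23 (𝓝[>] 0) (𝓝 (mittagLeffler23 0)) := by
    rw [show mittagLeffler23 = fun x => (1 / π) * mlf x from funext ml_eq]
    exact (((mlf_hasDerivAt 0).continuousAt.tendsto).mono_left nhdsWithin_le_nhds).const_mul _
  refine hc.congr' ?_
  filter_upwards [self_mem_nhdsWithin] with z hz using main_eq hz
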